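/- Let $t \ge 1$ be an integer and let $\lambda, a, b, c, d, e$ be strictly positive reals satisfying the system \[ \lambda a = 2b + (t+1)(d+e),\quad \lambda b = a + (t+1)b + tc,\quad \lambda c = 2b,\quad \lambda d = (t+1)(a+e),\quad \lambda e = a + d . \] Then: (i) $\lambda > t + 1$; (ii) $\lambda a = (\lambda^2 - (t+1)\lambda - 2t)\,b$; (iii) $(\lambda + (t+1))\,d = (t+1)(\lambda+1)\,e$; and moreover $d > e$, $a > c$ and $a > d$. -/

import Mathlib

/-- Consequences, for a strictly positive solution, of the eigenequations of the clique-shadow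
of the `t`-pleated bowtie. -/
theorem shadow_identities (t : ℕ) (ht : 1 ≤ t)
    (lam a b c d e : ℝ)
    (hlam : 0 < lam) (ha : 0 < a) (hb : 0 < b) (hc : 0 < c) (hd : 0 < d) (he : 0 < e)
    (h1 : lam * a = 2 * b + ((t : ℝ) + 1) * (d + e))
    (h2 : lam * b = a + ((t : ℝ) + 1) * b + (t : ℝ) * c)
    (h3 : lam * c = 2 * b)
    (h4 : lam * d = ((t : ℝ) + 1) * (a + e))
    (h5 : lam * e = a + d) :
    lam > (t : ℝ) + 1 ∧
    lam * a = (lam ^ 2 - ((t : ℝ) + 1) * lam - 2 * (t : ℝ)) * b ∧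
    (lam + ((t : ℝ) + 1)) * d = ((t : ℝ) + 1) * (lam + 1) * e ∧
    d > e ∧ a > c ∧ a > d := by
  have hs : (1 : ℝ) ≤ t := by exact_mod_cast ht
  have hs0 : (0 : ℝ) < t := by linarith
  have hratio : (lam + ((t : ℝ) + 1)) * d = ((t : ℝ) + 1) * (lam + 1) * e := by
    linear_combination h4 - ((t : ℝ) + 1) * h5
  refine ⟨?_, ?_, hratio, ?_, ?_, ?_⟩
  · have h : 0 < (lam - ((t : ℝ) + 1)) * b := by
      have : 0 < (t : ℝ) * c := mul_pos hs0 hc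
      linarith
    linarith [pos_of_mul_pos_left h hb.le]
  · linear_combination -lam * h2 - (t : ℝ) * h3
  · have h : 0 < (lam + ((t : ℝ) + 1)) * (d - e) := by
      have : 0 < (t : ℝ) * lam * e := by positivity
      linarith
    linarith [pos_of_mul_pos_right h (by positivity)]
  · have h : 0 < lam * (a - c) := by
      have : 0 < ((t : ℝ) + 1) * (d + e) := by positivity
      linarith
    linarith [pos_of_mul_pos_right h hlam.le]
  · have h : 0 < (lam + ((t : ℝ) + 1)) * (a - d) := by linarith
    linarith [pos_of_mul_pos_right h (by positivity)]
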